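/- There exists an absolute constant C > 0 such that for all compactly supported smooth functions g, h : ℝ → ℂ, all ε > 0, and all t ∈ ℝ, one has | ∫_ℝ h(t−s) g(t−s) / (ε + i s) ds | ≤ C · ( (‖h‖_{L²(ℝ)} + ‖h'‖_{L²(ℝ)}) ‖g‖_{L²(ℝ)} + ‖h‖_{L²(ℝ)} ‖g'‖_{L²(ℝ)} ). Equivalently, the convolution of the kernel H_ε(s) = (ε + i s)^{−1} with the product h·g is bounded in L^∞(ℝ) by C(‖h‖_{H¹}‖g‖_{L²} + ‖h‖_{L²}‖g‖_{H¹}), uniformly in ε > 0. -/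

import Mathlib

open MeasureTheory
open scoped ENNReal

lemma aux_cs {a b : ℝ → ℂ} (ha : MemLp a 2 volume) (hb : MemLp b 2 volume) :
    ∫ x, ‖a x‖ * ‖b x‖ ≤ (eLpNorm a 2 volume).toReal * (eLpNorm b 2 volume).toReal := by
  have h2 : ENNReal.ofReal 2 = 2 := by simp
  have key := integral_mul_norm_le_Lp_mul_Lq (μ := volume) (f := a) (g := b)
    Real.HolderConjugate.two_two (by rwa [h2]) (by rwa [h2])
  rw [ha.eLpNorm_eq_integral_rpow_norm (by simp) (by simp),
    hb.eLpNorm_eq_integral_rpow_norm (by simp) (by simp),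
    ENNReal.toReal_ofReal (by positivity), ENNReal.toReal_ofReal (by positivity)]
  simpa using key

lemma aux_holder {f : ℝ → ℂ} (hf : ContDiff ℝ 1 f) (hc : HasCompactSupport f) {x y : ℝ}
    (hxy : x ≤ y) :
    ‖f y - f x‖ ≤ Real.sqrt (y - x) * (eLpNorm (deriv f) 2 volume).toReal := by
  have hd : Continuous (deriv f) := hf.continuous_deriv le_rfl
  have h1 : ∫ s in x..y, deriv f s = f y - f x :=
    intervalIntegral.integral_deriv_eq_sub
      (fun z _ => (hf.differentiable one_ne_zero).differentiableAt) (hd.intervalIntegrable _ _)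
  have hm : MemLp (deriv f) 2 volume := hd.memLp_of_hasCompactSupport hc.deriv
  have hi : MemLp ((Set.Ioc x y).indicator (fun _ => (1 : ℂ))) 2 volume :=
    memLp_indicator_const 2 measurableSet_Ioc 1 (Or.inr (by simp))
  have h3 := aux_cs hi hm
  rw [eLpNorm_indicator_const measurableSet_Ioc (by simp) (by simp)] at h3
  have h4 : (‖(1 : ℂ)‖ₑ * volume (Set.Ioc x y) ^ (1 / (2 : ℝ≥0∞).toReal)).toReal
      = Real.sqrt (y - x) := by
    rw [Real.volume_Ioc, ENNReal.ofReal_rpow_of_nonneg (by linarith) (by simp),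
      Real.sqrt_eq_rpow]
    simp
    positivity
  rw [h4] at h3
  rw [← h1, intervalIntegral.integral_of_le hxy]
  refine (norm_integral_le_integral_norm _).trans (le_trans (le_of_eq ?_) h3)
  rw [← integral_indicator measurableSet_Ioc]
  congr 1
  ext s
  by_cases hs : s ∈ Set.Ioc x y <;> simp [hs]

lemma aux_sup {f : ℝ → ℂ} (hf : ContDiff ℝ 1 f) (hc : HasCompactSupport f) (x : ℝ) :
    ‖f x‖ ≤ Real.sqrt (2 * ((eLpNorm f 2 volume).toReal *
      (eLpNorm (deriv f) 2 volume).toReal)) := by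
  have hd : Continuous (deriv f) := hf.continuous_deriv le_rfl
  have hm : MemLp (deriv f) 2 volume := hd.memLp_of_hasCompactSupport hc.deriv
  have hm0 : MemLp f 2 volume := hf.continuous.memLp_of_hasCompactSupport hc
  have h3 := aux_cs hm0 hm
  apply Real.le_sqrt_of_sq_le
  have h1 := HasCompactSupport.integral_Iic_deriv_eq (hf.mul hf) (hc.mul_left (f' := f)) x
  have hde : ∀ s, deriv (f * f) s = 2 * (f s * deriv f s) := by
    intro s
    have := (hf.differentiable one_ne_zero).differentiableAt (x := s)
    rw [deriv_mul this this]; ring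
  have hint : Integrable (fun s => ‖f s‖ * ‖deriv f s‖) volume :=
    (hf.continuous.norm.mul hd.norm).integrable_of_hasCompactSupport (hc.norm.mul_right)
  have h5 : ‖f x‖ ^ 2 = ‖∫ s in Set.Iic x, deriv (f * f) s‖ := by
    have h1' : ∫ s in Set.Iic x, deriv (f * f) s = f x * f x := h1
    rw [h1', norm_mul, sq]
  rw [h5]
  refine (norm_integral_le_integral_norm _).trans ?_
  simp only [hde, norm_mul, Complex.norm_ofNat]
  rw [integral_const_mul]
  have := setIntegral_le_integral (s := Set.Iic x) hint (ae_of_all _ fun s => by positivity)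
  linarith

lemma aux_core {u : ℝ → ℂ} (hu : Continuous u) (hc : HasCompactSupport u) {M K L R ε : ℝ}
    (hε : 0 < ε) (hR : 0 < R) (hK : 0 ≤ K) (hM : ∀ s, ‖u s‖ ≤ M)
    (hH : ∀ s, 0 < s → ‖u s - u (-s)‖ ≤ 2 * K * Real.sqrt s) (hL : ∫ s, ‖u s‖ ≤ L) :
    ‖∫ s : ℝ, u s / ((ε : ℂ) + Complex.I * (s : ℂ))‖
      ≤ 2 * M * Real.pi + 4 * K * Real.sqrt R + 2 * L / R := by
  have hM0 : 0 ≤ M := (norm_nonneg _).trans (hM 0)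
  have hne : ∀ s : ℝ, (ε : ℂ) + Complex.I * (s : ℂ) ≠ 0 := by
    intro s h
    have := congrArg Complex.re h
    simp at this
    linarith
  set w : ℝ → ℂ := fun s => u s / ((ε : ℂ) + Complex.I * (s : ℂ)) with hw
  have hwc : Continuous w := hu.div (by fun_prop) hne
  have hwi : Integrable w volume := by
    refine hwc.integrable_of_hasCompactSupport ?_
    have : w = fun s => u s * ((ε : ℂ) + Complex.I * (s : ℂ))⁻¹ := by
      ext s; simp [hw, div_eq_mul_inv]
    rw [this]
    exact hc.mul_right
  have hui : Integrable (fun s => ‖u s‖) volume := (hu.integrable_of_hasCompactSupport hc).norm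
  have hui' : Integrable (fun s => ‖u (-s)‖) volume := hui.comp_neg
  have hsplit : ∫ s, w s = ∫ s in Set.Ioi (0:ℝ), (w (-s) + w s) := by
    rw [integral_add hwi.comp_neg.integrableOn hwi.integrableOn, integral_comp_neg_Ioi, neg_zero,
      intervalIntegral.integral_Iic_add_Ioi hwi.integrableOn hwi.integrableOn]
  rw [hsplit]
  let G1 : ℝ → ℝ := fun s => (2 * M / ε) * (1 + (s / ε) ^ 2)⁻¹
  let G2 : ℝ → ℝ := (Set.Ioc 0 R).indicator (fun s => 2 * K * s ^ (-(1/2) : ℝ))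
  let G3 : ℝ → ℝ := fun s => (‖u s‖ + ‖u (-s)‖) / R
  have i1 : Integrable G1 volume :=
    (integrable_inv_one_add_sq.comp_div hε.ne').const_mul _
  have i2 : Integrable G2 volume := by
    refine IntegrableOn.integrable_indicator ?_ measurableSet_Ioc
    refine Integrable.const_mul ?_ _
    exact (intervalIntegrable_iff_integrableOn_Ioc_of_le hR.le).1
      (intervalIntegral.intervalIntegrable_rpow' (by norm_num))
  have i3 : Integrable G3 volume := (hui.add hui').div_const _
  have n1 : ∀ s, 0 ≤ G1 s := fun s => by positivity
  have n2 : ∀ s, 0 ≤ G2 s := fun s => Set.indicator_nonneg (fun x hx => by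
    have := hx.1
    positivity) s
  have n3 : ∀ s, 0 ≤ G3 s := fun s => by positivity
  have e1 : ∫ s, G1 s = 2 * M * Real.pi := by
    simp only [G1]
    rw [integral_const_mul, Measure.integral_comp_div (fun x : ℝ => (1 + x ^ 2)⁻¹),
      integral_univ_inv_one_add_sq, abs_of_pos hε, smul_eq_mul]
    field_simp
  have e2 : ∫ s, G2 s = 4 * K * Real.sqrt R := by
    simp only [G2]
    rw [integral_indicator measurableSet_Ioc, integral_const_mul,
      ← intervalIntegral.integral_of_le hR.le, integral_rpow (by left; norm_num),
      Real.sqrt_eq_rpow]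
    norm_num
    ring
  have e3 : ∫ s, G3 s ≤ 2 * L / R := by
    simp only [G3]
    rw [integral_div, integral_add hui hui', integral_neg_eq_self (fun s => ‖u s‖) volume]
    gcongr
    linarith
  have hb : ‖∫ s in Set.Ioi (0:ℝ), (w (-s) + w s)‖ ≤
      ∫ s in Set.Ioi (0:ℝ), (G1 s + G2 s + G3 s) := by
    refine norm_integral_le_of_norm_le ((i1.add i2).add i3).integrableOn ?_
    refine (ae_restrict_iff' measurableSet_Ioi).2 (ae_of_all _ fun s hs => ?_)
    have hs : 0 < s := hs
    have hq : 0 < ε ^ 2 + s ^ 2 := by positivity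
    have hws : w (-s) + w s = ((u s + u (-s)) * ε - Complex.I * s * (u s - u (-s)))
        / ((ε ^ 2 + s ^ 2 : ℝ) : ℂ) := by
      have h1 := hne s
      have h2 := hne (-s)
      have h3 : ((ε ^ 2 + s ^ 2 : ℝ) : ℂ) =
        ((ε : ℂ) + Complex.I * ((-s : ℝ) : ℂ)) * ((ε : ℂ) + Complex.I * (s : ℂ)) := by
        push_cast
        linear_combination ((s:ℂ)^2) * Complex.I_sq
      simp only [hw]
      rw [h3]
      rw [div_add_div _ _ h2 h1]
      congr 1
      push_cast
      ring
    have hnum : ‖(u s + u (-s)) * ε - Complex.I * s * (u s - u (-s))‖ ≤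
        2 * M * ε + s * ‖u s - u (-s)‖ := by
      refine (norm_sub_le _ _).trans ?_
      simp only [norm_mul, Complex.norm_I, Complex.norm_real, Real.norm_eq_abs, abs_of_pos hε,
        abs_of_pos hs, one_mul]
      gcongr
      have := norm_add_le (u s) (u (-s))
      linarith [hM s, hM (-s)]
    rw [hws, norm_div, Complex.norm_real, Real.norm_eq_abs, abs_of_pos hq]
    have hG1 : 2 * M * ε / (ε ^ 2 + s ^ 2) = G1 s := by
      simp only [G1]
      field_simp
    have h2 : s * ‖u s - u (-s)‖ / (ε ^ 2 + s ^ 2) ≤ ‖u s - u (-s)‖ / s := by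
      rw [div_le_div_iff₀ hq hs]
      nlinarith [norm_nonneg (u s - u (-s)), mul_nonneg (norm_nonneg (u s - u (-s))) (sq_nonneg ε)]
    have h3 : ‖u s - u (-s)‖ / s ≤ G2 s + G3 s := by
      by_cases hsR : s ≤ R
      · have : G2 s = 2 * K * s ^ (-(1/2) : ℝ) := Set.indicator_of_mem (Set.mem_Ioc.2 ⟨hs, hsR⟩) _
        have h4 : ‖u s - u (-s)‖ / s ≤ G2 s := by
          rw [this, div_le_iff₀ hs, mul_assoc, ← Real.rpow_add_one hs.ne']
          have hx : s ^ (-(1/2) + 1 : ℝ) = Real.sqrt s := by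
            rw [Real.sqrt_eq_rpow]; norm_num
          rw [hx]
          exact hH s hs
        linarith [n3 s]
      · push Not at hsR
        have : ‖u s - u (-s)‖ / s ≤ G3 s := by
          simp only [G3]
          exact div_le_div₀ (by positivity) (norm_sub_le _ _) hR hsR.le
        linarith [n2 s]
    calc _ ≤ (2 * M * ε + s * ‖u s - u (-s)‖) / (ε ^ 2 + s ^ 2) := by gcongr
      _ = 2 * M * ε / (ε ^ 2 + s ^ 2) + s * ‖u s - u (-s)‖ / (ε ^ 2 + s ^ 2) := add_div _ _ _
      _ ≤ _ := by rw [hG1]; linarith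
  have hle := setIntegral_le_integral (s := Set.Ioi (0:ℝ)) ((i1.add i2).add i3)
    (ae_of_all _ fun s => add_nonneg (add_nonneg (n1 s) (n2 s)) (n3 s))
  have hadd : ∫ s, (G1 + G2 + G3) s = (∫ s, G1 s) + (∫ s, G2 s) + (∫ s, G3 s) := by
    rw [integral_add' (i1.add i2) i3, integral_add' i1 i2]
  rw [hadd] at hle
  have hle' : ∫ s in Set.Ioi (0:ℝ), (G1 s + G2 s + G3 s) ≤ _ := hle
  linarith

/-- Bilinear Hilbert-transform-type estimate: the convolution of the kernel
`H_ε(s) = (ε + i s)⁻¹` with a product `h·g` is bounded in `L^∞`, uniformly in `ε > 0`,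
by `C (‖h‖_{H¹}‖g‖_{L²} + ‖h‖_{L²}‖g‖_{H¹})`. -/
theorem stmt4 :
    ∃ C : ℝ, 0 < C ∧
      ∀ g h : ℝ → ℂ,
        ContDiff ℝ (⊤ : ℕ∞) g → HasCompactSupport g →
        ContDiff ℝ (⊤ : ℕ∞) h → HasCompactSupport h →
        ∀ ε : ℝ, 0 < ε → ∀ t : ℝ,
        ‖∫ s : ℝ, h (t - s) * g (t - s) / ((ε : ℂ) + Complex.I * (s : ℂ))‖
          ≤ C * (((eLpNorm h 2 volume).toReal + (eLpNorm (deriv h) 2 volume).toReal) *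
                (eLpNorm g 2 volume).toReal
              + (eLpNorm h 2 volume).toReal * (eLpNorm (deriv g) 2 volume).toReal) := by
  refine ⟨14, by norm_num, ?_⟩
  intro g h hg0 hgc hh0 hhc ε hε t
  have hg : ContDiff ℝ 1 g := hg0.of_le (by exact_mod_cast le_top)
  have hh : ContDiff ℝ 1 h := hh0.of_le (by exact_mod_cast le_top)
  have supg := aux_sup hg hgc
  have suph := aux_sup hh hhc
  have holg := fun x y hxy => aux_holder hg hgc (x := x) (y := y) hxy
  have holh := fun x y hxy => aux_holder hh hhc (x := x) (y := y) hxy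
  have cs := aux_cs (hh.continuous.memLp_of_hasCompactSupport hhc)
    (hg.continuous.memLp_of_hasCompactSupport hgc)
  have hA : 0 ≤ (eLpNorm h 2 volume).toReal := ENNReal.toReal_nonneg
  have hA' : 0 ≤ (eLpNorm (deriv h) 2 volume).toReal := ENNReal.toReal_nonneg
  have hB : 0 ≤ (eLpNorm g 2 volume).toReal := ENNReal.toReal_nonneg
  have hB' : 0 ≤ (eLpNorm (deriv g) 2 volume).toReal := ENNReal.toReal_nonneg
  generalize (eLpNorm h 2 volume).toReal = A at *
  generalize (eLpNorm (deriv h) 2 volume).toReal = A' at *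
  generalize (eLpNorm g 2 volume).toReal = B at *
  generalize (eLpNorm (deriv g) 2 volume).toReal = B' at *
  by_cases hz : A * A' * (B * B') = 0
  · have : ∀ x, h x * g x = 0 := by
      intro x
      rcases mul_eq_zero.1 hz with h0 | h0
      · have := suph x
        rw [h0] at this
        simp at this
        simp [this]
      · have := supg x
        rw [h0] at this
        simp at this
        simp [this]
    simp only [this, zero_div, integral_zero, norm_zero]
    positivity
  have hAp : 0 < A := lt_of_le_of_ne hA (by rintro rfl; simp at hz)
  have hAp' : 0 < A' := lt_of_le_of_ne hA' (by rintro rfl; simp at hz)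
  have hBp : 0 < B := lt_of_le_of_ne hB (by rintro rfl; simp at hz)
  have hBp' : 0 < B' := lt_of_le_of_ne hB' (by rintro rfl; simp at hz)
  obtain ⟨P, hP⟩ : ∃ P, P = Real.sqrt (2 * (A * A')) := ⟨_, rfl⟩
  obtain ⟨Q, hQ⟩ : ∃ Q, Q = Real.sqrt (2 * (B * B')) := ⟨_, rfl⟩
  have hP0 : 0 ≤ P := hP ▸ Real.sqrt_nonneg _
  have hQ0 : 0 ≤ Q := hQ ▸ Real.sqrt_nonneg _
  have hP2 : P ^ 2 = 2 * (A * A') := by rw [hP, Real.sq_sqrt (by positivity)]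
  have hQ2 : Q ^ 2 = 2 * (B * B') := by rw [hQ, Real.sq_sqrt (by positivity)]
  rw [← hP] at suph
  rw [← hQ] at supg
  obtain ⟨S, hS⟩ : ∃ S, S = A' * B + A * B' := ⟨_, rfl⟩
  have hSp : 0 < S := by rw [hS]; positivity
  have hcomp : HasCompactSupport (fun s => h (t - s) * g (t - s)) := by
    have := (hhc.mul_right (f' := g)).comp_homeomorph (Homeomorph.subLeft t)
    exact this
  have main := aux_core (u := fun s => h (t - s) * g (t - s)) (M := P * Q)
    (K := A' * Q + P * B') (L := A * B) (R := A * B / S) (ε := ε)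
    ((hh.continuous.comp (by fun_prop)).mul (hg.continuous.comp (by fun_prop))) hcomp hε
    (by positivity) (by positivity)
    (fun s => by
      rw [norm_mul]
      exact mul_le_mul (suph _) (supg _) (norm_nonneg _) hP0)
    (fun s hs => by
      have e : h (t - s) * g (t - s) - h (t - -s) * g (t - -s) =
        -((h (t - -s) - h (t - s)) * g (t - s) + h (t - -s) * (g (t - -s) - g (t - s))) := by ring
      have b1 := holh (t - s) (t - -s) (by linarith)
      have b2 := holg (t - s) (t - -s) (by linarith)
      have e2 : Real.sqrt (t - -s - (t - s)) ≤ 2 * Real.sqrt s := by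
        rw [Real.sqrt_le_left (by positivity), mul_pow, Real.sq_sqrt hs.le]
        linarith
      have b1' := b1.trans (mul_le_mul_of_nonneg_right e2 hA')
      have b2' := b2.trans (mul_le_mul_of_nonneg_right e2 hB')
      show ‖h (t - s) * g (t - s) - h (t - -s) * g (t - -s)‖ ≤ _
      rw [e, norm_neg]
      refine (norm_add_le _ _).trans ?_
      rw [norm_mul, norm_mul]
      calc _ ≤ (2 * Real.sqrt s * A') * Q + P * (2 * Real.sqrt s * B') := by
            refine add_le_add (mul_le_mul b1' (supg _) (norm_nonneg _) (by positivity))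
              (mul_le_mul (suph _) b2' (norm_nonneg _) hP0)
        _ = _ := by ring)
    (by
      have := integral_sub_left_eq_self (fun x => ‖h x * g x‖) volume t
      rw [this]
      simpa only [norm_mul] using cs)
  refine main.trans ?_
  have hAM : 4 * ((A' * B) * (A * B')) ≤ S ^ 2 := by
    rw [hS]; nlinarith [sq_nonneg (A' * B - A * B')]
  have c1 : P * Q ≤ S := by
    refine (sq_le_sq₀ (by positivity) hSp.le).1 ?_
    rw [mul_pow, hP2, hQ2]; linarith
  have c2 : (A' * Q + P * B') * Real.sqrt (A * B / S) ≤ S := by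
    refine (sq_le_sq₀ (by positivity) hSp.le).1 ?_
    rw [mul_pow, Real.sq_sqrt (by positivity)]
    have k1 : (A' * Q + P * B') ^ 2 ≤ 4 * (A' * B') * S := by
      have : (A' * Q + P * B') ^ 2 ≤ 2 * (A' ^ 2 * Q ^ 2 + P ^ 2 * B' ^ 2) := by
        nlinarith [sq_nonneg (A' * Q - P * B')]
      rw [hP2, hQ2] at this
      rw [hS]; linarith
    calc _ ≤ 4 * (A' * B') * S * (A * B / S) := by gcongr
      _ = 4 * ((A' * B) * (A * B')) := by field_simp
      _ ≤ _ := hAM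
  have c3 : 2 * (A * B) / (A * B / S) = 2 * S := by field_simp
  have c4 : S ≤ (A + A') * B + A * B' := by rw [hS]; nlinarith [mul_pos hAp hBp]
  have hpi := Real.pi_lt_four
  have hpi0 := Real.pi_pos
  rw [c3]
  have c5 : 2 * (P * Q) * Real.pi ≤ 2 * S * 4 := by gcongr
  linarith
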